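/- Let q ≥ 2 be an even integer, let λ_i > 0 for i ∈ ℕ, and let {f_n^{(i)} : n, i ∈ ℕ} be a bi-indexed family of symmetric functions in L²(ℝ₊^q) such that: ⟨f_n^{(i)}, f_n^{(j)}⟩ → δ_{ij} λ_i for all i, j; ‖f_n^{(i)} ⌢_{q/2} f_n^{(i)} − f_n^{(i)}‖ → 0 for all i; ‖f_n^{(i)} ⌢_r f_n^{(i)}‖ → 0 for all i and all 1 ≤ r ≤ q−1 with r ≠ q/2; and ‖f_n^{(i)} ⌢_r f_n^{(j)}‖ → 0 for all i ≠ j and all 1 ≤ r ≤ q−1. Then for every s ≥ 1, all indices j₁, …, j_s, i ∈ ℕ, and every integer 1 ≤ r ≤ q−1 with r ≠ q/2, ‖(f_n^{(j₁)} ⌢_{q/2} f_n^{(j₂)} ⌢_{q/2} ⋯ ⌢_{q/2} f_n^{(j_s)}) ⌢_r f_n^{(i)}‖ → 0 as n → ∞ (the inner iterated contraction is bracketed from the left). -/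

import Mathlib

open MeasureTheory Filter Topology

noncomputable section

/-- The positive orthant `ℝ₊ⁿ` inside `ℝⁿ`. -/
def posOrthant (n : ℕ) : Set (Fin n → ℝ) := {x | ∀ i, 0 ≤ x i}

/-- Lebesgue measure restricted to the positive orthant; the measure underlying `L²(ℝ₊ⁿ)`. -/
def μpos (n : ℕ) : MeasureTheory.Measure (Fin n → ℝ) :=
  MeasureTheory.volume.restrict (posOrthant n)

/-- Total extension of a finite tuple, giving the junk value `0` out of range. -/
def pad {k : ℕ} (t : Fin k → ℝ) (i : ℕ) : ℝ := if h : i < k then t ⟨i, h⟩ else 0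

/-- The `L²` inner product `⟨f, g⟩ = ∫ f ⬝ conj g` over the positive orthant. -/
def L2inner (n : ℕ) (f g : (Fin n → ℝ) → ℂ) : ℂ :=
  ∫ x, f x * (starRingEnd ℂ) (g x) ∂(μpos n)

/-- The `L²` norm over the positive orthant. -/
def L2norm (n : ℕ) (f : (Fin n → ℝ) → ℂ) : ℝ :=
  Real.sqrt (∫ x, ‖f x‖ ^ 2 ∂(μpos n))

/-- The adjoint `f*(t₁,…,tₙ) = conj (f (tₙ,…,t₁))`. -/
def adjF (n : ℕ) (f : (Fin n → ℝ) → ℂ) : (Fin n → ℝ) → ℂ :=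
  fun t => (starRingEnd ℂ) (f fun i => t i.rev)

/-- `f` is symmetric when `f = f*` a.e. on the positive orthant. -/
def IsSymmFn (n : ℕ) (f : (Fin n → ℝ) → ℂ) : Prop :=
  ∀ᵐ t ∂(μpos n), f t = adjF n f t

/-- Reindexing a multivariate function along an equality of dimensions. -/
def reindex {a b : ℕ} (h : a = b) (F : (Fin a → ℝ) → ℂ) : (Fin b → ℝ) → ℂ :=
  fun t => F fun j => t (Fin.cast h j)

/-- The integrand (in the `s`-variables) of the `p`-th arc contraction
`(f ⌢_p g)(t₁,…,t_{m+n-2p}) = ∫ f(t₁,…,t_{m-p},s_p,…,s₁) g(s₁,…,s_p,t_{m-p+1},…,t_{m+n-2p}) ds`. -/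
def arcKer (m n p : ℕ) (f : (Fin m → ℝ) → ℂ) (g : (Fin n → ℝ) → ℂ)
    (t : Fin (m + n - 2 * p) → ℝ) (s : Fin p → ℝ) : ℂ :=
  f (fun j => if (j : ℕ) < m - p then pad t j else pad s (m - 1 - (j : ℕ))) *
  g (fun j => if (j : ℕ) < p then pad s j else pad t (m + (j : ℕ) - 2 * p))

/-- The `p`-th arc contraction `f ⌢_p g`. -/
def arc (m n p : ℕ) (f : (Fin m → ℝ) → ℂ) (g : (Fin n → ℝ) → ℂ) :
    (Fin (m + n - 2 * p) → ℝ) → ℂ :=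
  fun t => ∫ s in posOrthant p, arcKer m n p f g t s

/-- The integrand of the star contraction of index `(p, p-1)`:
`(f ⋆_p^{p-1} g)(t₁,…,t_{m+n-2p+1})
  = ∫ f(t₁,…,t_{m-p},t_{m-p+1},s_{p-1},…,s₁) g(s₁,…,s_{p-1},t_{m-p+1},…,t_{m+n-2p+1}) ds`. -/
def starKer (m n p : ℕ) (f : (Fin m → ℝ) → ℂ) (g : (Fin n → ℝ) → ℂ)
    (t : Fin (m + n + 1 - 2 * p) → ℝ) (s : Fin (p - 1) → ℝ) : ℂ :=
  f (fun j => if (j : ℕ) < m - p + 1 then pad t j else pad s (m - 1 - (j : ℕ))) *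
  g (fun j => if (j : ℕ) < p - 1 then pad s j else pad t (m + (j : ℕ) + 1 - 2 * p))

/-- The star contraction `f ⋆_p^{p-1} g` of index `(p, p-1)`. -/
def starC (m n p : ℕ) (f : (Fin m → ℝ) → ℂ) (g : (Fin n → ℝ) → ℂ) :
    (Fin (m + n + 1 - 2 * p) → ℝ) → ℂ :=
  fun t => ∫ s in posOrthant (p - 1), starKer m n p f g t s

/-- The `q/2`-th arc contraction of two functions of `q` (even) variables,
expressed again as a function of `q` variables. -/
def contrHalf (q : ℕ) (f g : (Fin q → ℝ) → ℂ) : (Fin q → ℝ) → ℂ :=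
  fun t => ∫ s in posOrthant (q / 2),
    (f fun j => if (j : ℕ) < q - q / 2 then pad t j else pad s (q - 1 - (j : ℕ))) *
    (g fun j => if (j : ℕ) < q / 2 then pad s j else pad t (q + (j : ℕ) - 2 * (q / 2)))

/-- The full contraction `f ⌢_q g = ∫ f(t₁,…,t_q) g(t_q,…,t₁) dt` of two
functions of `q` variables. -/
def fullContr (q : ℕ) (f g : (Fin q → ℝ) → ℂ) : ℂ :=
  ∫ t in posOrthant q, f t * g fun i => t i.rev

/-- A `q`-dimensional square (cube): a product of `q` intervals of equal length. -/
def IsCube (q : ℕ) (S : Set (Fin q → ℝ)) : Prop :=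
  ∃ (a : Fin q → ℝ) (c : ℝ), S = Set.univ.pi fun i => Set.Icc (a i) (a i + c)

/-- One step of the left-bracketed iterated contraction, keeping track of the dimension. -/
def iterStep (q : ℕ) (acc : (d : ℕ) × ((Fin d → ℝ) → ℂ))
    (pr : ℕ × ((Fin q → ℝ) → ℂ)) : (d : ℕ) × ((Fin d → ℝ) → ℂ) :=
  ⟨acc.1 + q - 2 * pr.1, arc acc.1 q pr.1 acc.2 pr.2⟩

/-- The left-bracketed iterated contraction `(⋯((f₀ ⌢_{r₁} f₁) ⌢_{r₂} f₂)⋯) ⌢_{r_k} f_k`. -/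
def iterArc (q : ℕ) (f0 : (Fin q → ℝ) → ℂ) (l : List (ℕ × ((Fin q → ℝ) → ℂ))) :
    (d : ℕ) × ((Fin d → ℝ) → ℂ) :=
  l.foldl (iterStep q) ⟨q, f0⟩

/-- The value of a (`0`-dimensional, i.e. scalar) iterated contraction. -/
def scalarOf (x : (d : ℕ) × ((Fin d → ℝ) → ℂ)) : ℂ := x.2 fun _ => 0

/-!
For even `q` the contraction `⌢_{q/2}` is a submultiplicative product on `L²(ℝ₊^q)`: after grouping
the variables, a contraction is a composition of integral kernels, and Cauchy–Schwarz gives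
`‖f ⌢_p g‖ ≤ ‖f‖ ‖g‖`. The hypotheses make the `f_n^{(i)}` asymptotically orthogonal idempotents for
this product, so an iterated product starting with `f_n^{(j)}` is `f_n^{(j)} + o(1)` when all
indices equal `j`, and `o(1)` otherwise. Contracting with a bounded sequence preserves `o(1)`
errors.
-/

section Contraction

variable {𝕜 α β γ : Type*} [RCLike 𝕜] [MeasurableSpace α] [MeasurableSpace β] [MeasurableSpace γ]
  {μ : Measure α} {ν : Measure β} {ρ : Measure γ}

theorem memLp_prodMk_left_ae {E : Type*} [NormedAddCommGroup E] [SFinite μ] [SFinite ν]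
    {p : ENNReal} (hp_zero : p ≠ 0) (hp_top : p ≠ ⊤) {F : α × β → E}
    (hF : MemLp F p (μ.prod ν)) : ∀ᵐ a ∂μ, MemLp (fun b => F (a, b)) p ν := by
  filter_upwards [(hF.integrable_norm_rpow hp_zero hp_top).prod_right_ae, hF.1.prodMk_left]
    with a hint hmeas
  exact (integrable_norm_rpow_iff hmeas hp_zero hp_top).1 hint

theorem memLp_prodMk_right_ae {E : Type*} [NormedAddCommGroup E] [SFinite μ] [SFinite ν]
    {p : ENNReal} (hp_zero : p ≠ 0) (hp_top : p ≠ ⊤) {F : α × β → E}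
    (hF : MemLp F p (μ.prod ν)) : ∀ᵐ b ∂ν, MemLp (fun a => F (a, b)) p μ :=
  memLp_prodMk_left_ae hp_zero hp_top (hF.comp_measurePreserving Measure.measurePreserving_swap)

theorem sq_norm_integral_mul_le {f g : β → 𝕜} (hf : MemLp f 2 ν) (hg : MemLp g 2 ν) :
    ‖∫ b, f b * g b ∂ν‖ ^ 2 ≤ (∫ b, ‖f b‖ ^ 2 ∂ν) * ∫ b, ‖g b‖ ^ 2 ∂ν := by
  have two_eq : ENNReal.ofReal 2 = 2 := ENNReal.ofReal_ofNat 2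
  have holder := integral_mul_norm_le_Lp_mul_Lq Real.HolderConjugate.two_two
    (two_eq ▸ hf) (two_eq ▸ hg)
  simp only [Real.rpow_two, ← Real.sqrt_eq_rpow] at holder
  calc ‖∫ b, f b * g b ∂ν‖ ^ 2
      ≤ (∫ b, ‖f b‖ * ‖g b‖ ∂ν) ^ 2 := by
        gcongr
        simpa only [norm_mul] using norm_integral_le_integral_norm (μ := ν) fun b => f b * g b
    _ ≤ (√(∫ b, ‖f b‖ ^ 2 ∂ν) * √(∫ b, ‖g b‖ ^ 2 ∂ν)) ^ 2 := by gcongr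
    _ = (∫ b, ‖f b‖ ^ 2 ∂ν) * ∫ b, ‖g b‖ ^ 2 ∂ν := by
        rw [mul_pow, Real.sq_sqrt (by positivity), Real.sq_sqrt (by positivity)]

/-- Composition of two integral kernels along the middle variable. Up to a regrouping of
coordinates, every arc contraction has this form. -/
def contraction (ν : Measure β) (F : α × β → 𝕜) (G : β × γ → 𝕜) (z : α × γ) : 𝕜 :=
  ∫ b, F (z.1, b) * G (b, z.2) ∂ν

variable [SFinite ν] [SFinite ρ] {F : α × β → 𝕜} {G : β × γ → 𝕜}

theorem integrable_prod_integral_sq_norm (hF : MemLp F 2 (μ.prod ν)) (hG : MemLp G 2 (ν.prod ρ)) :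
    Integrable (fun z : α × γ => (∫ b, ‖F (z.1, b)‖ ^ 2 ∂ν) * ∫ b, ‖G (b, z.2)‖ ^ 2 ∂ν)
      (μ.prod ρ) :=
  (hF.integrable_norm_pow two_ne_zero).integral_prod_left.mul_prod
    (hG.integrable_norm_pow two_ne_zero).integral_prod_right

variable [SFinite μ]

theorem aestronglyMeasurable_contraction (hF : AEStronglyMeasurable F (μ.prod ν))
    (hG : AEStronglyMeasurable G (ν.prod ρ)) :
    AEStronglyMeasurable (contraction ν F G) (μ.prod ρ) := by
  have left_proj : Measure.QuasiMeasurePreserving (fun w : (α × γ) × β => (w.1.1, w.2))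
      ((μ.prod ρ).prod ν) (μ.prod ν) :=
    QuasiMeasurePreserving.prodMap Measure.quasiMeasurePreserving_fst (.id ν)
  have right_proj : Measure.QuasiMeasurePreserving (fun w : (α × γ) × β => (w.2, w.1.2))
      ((μ.prod ρ).prod ν) (ν.prod ρ) :=
    Measure.measurePreserving_swap.quasiMeasurePreserving.comp
      (QuasiMeasurePreserving.prodMap (Measure.quasiMeasurePreserving_snd (μ := μ)) (.id ν))
  exact ((hF.comp_quasiMeasurePreserving left_proj).mul
    (hG.comp_quasiMeasurePreserving right_proj)).integral_prod_right'

theorem memLp_slices_ae (hF : MemLp F 2 (μ.prod ν)) (hG : MemLp G 2 (ν.prod ρ)) :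
    ∀ᵐ z ∂μ.prod ρ, MemLp (fun b => F (z.1, b)) 2 ν ∧ MemLp (fun b => G (b, z.2)) 2 ν :=
  (Measure.quasiMeasurePreserving_fst.ae
      (memLp_prodMk_left_ae two_ne_zero ENNReal.ofNat_ne_top hF)).and
    (Measure.quasiMeasurePreserving_snd.ae
      (memLp_prodMk_right_ae two_ne_zero ENNReal.ofNat_ne_top hG))

theorem contraction_sub_left_ae {F' : α × β → 𝕜} (hF : MemLp F 2 (μ.prod ν))
    (hF' : MemLp F' 2 (μ.prod ν)) (hG : MemLp G 2 (ν.prod ρ)) :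
    contraction ν (F - F') G =ᵐ[μ.prod ρ] contraction ν F G - contraction ν F' G := by
  filter_upwards [memLp_slices_ae hF hG, memLp_slices_ae hF' hG] with z ⟨hFz, hGz⟩ ⟨hF'z, _⟩
  simp only [contraction, Pi.sub_apply, sub_mul]
  exact integral_sub (hFz.integrable_mul hGz) (hF'z.integrable_mul hGz)

theorem sq_norm_contraction_le_ae (hF : MemLp F 2 (μ.prod ν)) (hG : MemLp G 2 (ν.prod ρ)) :
    ∀ᵐ z ∂μ.prod ρ, ‖contraction ν F G z‖ ^ 2 ≤
      (∫ b, ‖F (z.1, b)‖ ^ 2 ∂ν) * ∫ b, ‖G (b, z.2)‖ ^ 2 ∂ν :=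
  (memLp_slices_ae hF hG).mono fun _ hz => sq_norm_integral_mul_le hz.1 hz.2

theorem memLp_contraction (hF : MemLp F 2 (μ.prod ν)) (hG : MemLp G 2 (ν.prod ρ)) :
    MemLp (contraction ν F G) 2 (μ.prod ρ) := by
  have hmeas := aestronglyMeasurable_contraction hF.1 hG.1
  refine (memLp_two_iff_integrable_sq_norm hmeas).2
    ((integrable_prod_integral_sq_norm hF hG).mono' (hmeas.norm.pow 2) ?_)
  simpa using sq_norm_contraction_le_ae hF hG

theorem integral_sq_norm_contraction_le (hF : MemLp F 2 (μ.prod ν))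
    (hG : MemLp G 2 (ν.prod ρ)) :
    ∫ z, ‖contraction ν F G z‖ ^ 2 ∂μ.prod ρ ≤
      (∫ w, ‖F w‖ ^ 2 ∂μ.prod ν) * ∫ w, ‖G w‖ ^ 2 ∂ν.prod ρ := by
  calc ∫ z, ‖contraction ν F G z‖ ^ 2 ∂μ.prod ρ
      ≤ ∫ z : α × γ, (∫ b, ‖F (z.1, b)‖ ^ 2 ∂ν) * ∫ b, ‖G (b, z.2)‖ ^ 2 ∂ν ∂μ.prod ρ :=
        integral_mono_ae ((memLp_contraction hF hG).integrable_norm_pow two_ne_zero)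
          (integrable_prod_integral_sq_norm hF hG) (sq_norm_contraction_le_ae hF hG)
    _ = (∫ a, ∫ b, ‖F (a, b)‖ ^ 2 ∂ν ∂μ) * ∫ c, ∫ b, ‖G (b, c)‖ ^ 2 ∂ν ∂ρ :=
        integral_prod_mul (fun a => ∫ b, ‖F (a, b)‖ ^ 2 ∂ν) fun c => ∫ b, ‖G (b, c)‖ ^ 2 ∂ν
    _ = (∫ w, ‖F w‖ ^ 2 ∂μ.prod ν) * ∫ w, ‖G w‖ ^ 2 ∂ν.prod ρ := by
        rw [integral_prod _ (hF.integrable_norm_pow two_ne_zero),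
          integral_prod_symm _ (hG.integrable_norm_pow two_ne_zero)]

end Contraction

section Glue

variable {ι κ τ α : Type*} [MeasurableSpace α]

/-- Concatenation of an `ι`-tuple and a `κ`-tuple into a `τ`-tuple, placed by `e`. -/
def glue (e : ι ⊕ κ ≃ τ) : (ι → α) × (κ → α) ≃ᵐ (τ → α) :=
  (MeasurableEquiv.sumPiEquivProdPi fun _ : ι ⊕ κ => α).symm.trans
    (MeasurableEquiv.piCongrLeft (fun _ => α) e)

theorem glue_apply_apply (e : ι ⊕ κ ≃ τ) (x : ι → α) (y : κ → α) (k : ι ⊕ κ) :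
    glue e (x, y) (e k) = Sum.elim x y k := by
  rw [glue, MeasurableEquiv.trans_apply, MeasurableEquiv.piCongrLeft_apply_apply]
  cases k <;> rfl

theorem eq_glue_iff {e : ι ⊕ κ ≃ τ} {x : ι → α} {y : κ → α} {z : τ → α} :
    z = glue e (x, y) ↔ (∀ i, z (e (.inl i)) = x i) ∧ ∀ k, z (e (.inr k)) = y k := by
  rw [funext_iff, e.symm.forall_congr_left, Sum.forall]
  simp only [Equiv.symm_symm, glue_apply_apply, Sum.elim_inl, Sum.elim_inr]

theorem measurePreserving_glue [Fintype ι] [Fintype κ] [Fintype τ] (e : ι ⊕ κ ≃ τ) (μ : Measure α)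
    [SigmaFinite μ] :
    MeasurePreserving (glue e)
      ((Measure.pi fun _ : ι => μ).prod (Measure.pi fun _ : κ => μ)) (Measure.pi fun _ => μ) :=
  (measurePreserving_piCongrLeft (fun _ => μ) e).comp
    (measurePreserving_sumPiEquivProdPi_symm fun _ => μ)

end Glue

theorem μpos_eq_pi (n : ℕ) :
    μpos n = Measure.pi fun _ : Fin n => (volume : Measure ℝ).restrict (Set.Ici 0) := by
  have orthant_eq : posOrthant n = Set.univ.pi fun _ => Set.Ici 0 := by
    ext x
    simp only [posOrthant, Set.mem_ofPred_eq, Set.mem_univ_pi, Set.mem_Ici]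
  rw [μpos, orthant_eq, volume_pi, Measure.restrict_pi_pi]

instance sigmaFinite_μpos (n : ℕ) : SigmaFinite (μpos n) := by
  rw [μpos_eq_pi]
  infer_instance

theorem measurePreserving_glue_μpos {a b c : ℕ} (e : Fin a ⊕ Fin b ≃ Fin c) :
    MeasurePreserving (glue e) ((μpos a).prod (μpos b)) (μpos c) := by
  simp only [μpos_eq_pi]
  exact measurePreserving_glue e _

section GlueOrthant

variable {a b c : ℕ} {e : Fin a ⊕ Fin b ≃ Fin c}

theorem memLp_comp_glue_iff {h : (Fin c → ℝ) → ℂ} {p : ENNReal} :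
    MemLp (h ∘ glue e) p ((μpos a).prod (μpos b)) ↔ MemLp h p (μpos c) := by
  rw [← (measurePreserving_glue_μpos e).map_eq, MeasurableEquiv.memLp_map_measure_iff]

theorem integral_sq_norm_comp_glue (e : Fin a ⊕ Fin b ≃ Fin c) (h : (Fin c → ℝ) → ℂ) :
    ∫ z, ‖(h ∘ glue e) z‖ ^ 2 ∂(μpos a).prod (μpos b) = ∫ t, ‖h t‖ ^ 2 ∂μpos c :=
  (measurePreserving_glue_μpos e).integral_comp' fun t => ‖h t‖ ^ 2

theorem ae_eq_of_comp_glue {f g : (Fin c → ℝ) → ℂ}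
    (h : f ∘ glue e =ᵐ[(μpos a).prod (μpos b)] g ∘ glue e) : f =ᵐ[μpos c] g := by
  rw [← (measurePreserving_glue_μpos e).map_eq]
  exact (glue e).measurableEmbedding.ae_map_iff.2 h

end GlueOrthant

section L2norm

variable {n : ℕ} {f g h : (Fin n → ℝ) → ℂ}

theorem L2norm_zero (n : ℕ) : L2norm n 0 = 0 := by
  simp [L2norm]

theorem L2norm_nonneg (n : ℕ) (f : (Fin n → ℝ) → ℂ) : 0 ≤ L2norm n f :=
  Real.sqrt_nonneg _

theorem L2norm_eq_lpNorm (hf : AEStronglyMeasurable f (μpos n)) :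
    L2norm n f = lpNorm f 2 (μpos n) := by
  simp [lpNorm_eq_integral_norm_rpow_toReal two_ne_zero ENNReal.ofNat_ne_top hf, L2norm,
    Real.sqrt_eq_rpow]

theorem L2norm_congr_ae (hfg : f =ᵐ[μpos n] g) : L2norm n f = L2norm n g := by
  rw [L2norm, L2norm, integral_congr_ae (hfg.mono fun x hx => by rw [hx])]

theorem L2norm_sub_le_L2norm_sub_add_L2norm_sub (hf : MemLp f 2 (μpos n)) (hg : MemLp g 2 (μpos n))
    (hh : MemLp h 2 (μpos n)) :
    L2norm n (f - h) ≤ L2norm n (f - g) + L2norm n (g - h) := by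
  rw [L2norm_eq_lpNorm (hf.sub hh).1, L2norm_eq_lpNorm (hf.sub hg).1,
    L2norm_eq_lpNorm (hg.sub hh).1]
  simpa using lpNorm_add_le (hf.sub hg) one_le_two (g := g - h)

theorem L2norm_eq_sqrt_norm_L2inner (f : (Fin n → ℝ) → ℂ) :
    L2norm n f = √‖L2inner n f f‖ := by
  have inner_eq : L2inner n f f = ((∫ x, ‖f x‖ ^ 2 ∂μpos n : ℝ) : ℂ) := by
    rw [L2inner, ← integral_complex_ofReal]
    simp [Complex.mul_conj']
  rw [inner_eq, Complex.norm_of_nonneg (by positivity), L2norm]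

variable {κ : Type*} {l : Filter κ} {u v w : κ → (Fin n → ℝ) → ℂ}

theorem tendsto_L2norm_sub_trans (hu : ∀ k, MemLp (u k) 2 (μpos n))
    (hv : ∀ k, MemLp (v k) 2 (μpos n)) (hw : ∀ k, MemLp (w k) 2 (μpos n))
    (huv : Tendsto (fun k => L2norm n (u k - v k)) l (𝓝 0))
    (hvw : Tendsto (fun k => L2norm n (v k - w k)) l (𝓝 0)) :
    Tendsto (fun k => L2norm n (u k - w k)) l (𝓝 0) :=
  squeeze_zero (fun _ => L2norm_nonneg _ _)
    (fun k => L2norm_sub_le_L2norm_sub_add_L2norm_sub (hu k) (hv k) (hw k))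
    (by simpa only [add_zero] using huv.add hvw)

theorem tendsto_L2norm_zero_of_sub (hu : ∀ k, MemLp (u k) 2 (μpos n))
    (hv : ∀ k, MemLp (v k) 2 (μpos n))
    (huv : Tendsto (fun k => L2norm n (u k - v k)) l (𝓝 0))
    (hv_zero : Tendsto (fun k => L2norm n (v k)) l (𝓝 0)) :
    Tendsto (fun k => L2norm n (u k)) l (𝓝 0) := by
  simpa only [Pi.zero_apply, sub_zero] using
    tendsto_L2norm_sub_trans (w := 0) hu hv (fun _ => .zero) huv
      (by simpa only [Pi.zero_apply, sub_zero] using hv_zero)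

end L2norm

section Arc

variable {m n p : ℕ} {f f' : (Fin m → ℝ) → ℂ} {g : (Fin n → ℝ) → ℂ}

theorem pad_of_lt {k i : ℕ} (t : Fin k → ℝ) (hi : i < k) : pad t i = t ⟨i, hi⟩ :=
  dif_pos hi

theorem pad_comp_cast {k d : ℕ} (h : k = d) (t : Fin d → ℝ) :
    pad (fun j => t (Fin.cast h j)) = pad t := by
  subst h
  rfl

/-- Splitting of a tuple into consecutive blocks. -/
def blocks {a b c : ℕ} (h : a + b = c) : Fin a ⊕ Fin b ≃ Fin c :=
  finSumFinEquiv.trans (finCongr h)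

/-- Splitting of a tuple into consecutive blocks, the second one read backwards: in `f ⌢_p g` the
contracted variables of `f` occur in the order `s_p, …, s₁`. -/
def revBlocks {a b c : ℕ} (h : a + b = c) : Fin a ⊕ Fin b ≃ Fin c :=
  (Equiv.sumCongr (Equiv.refl _) Fin.revPerm).trans (blocks h)

theorem pad_glue_blocks_left {a b c : ℕ} (h : a + b = c) (x : Fin a → ℝ) (y : Fin b → ℝ)
    (i : Fin a) : pad (glue (blocks h) (x, y)) i = x i := by
  rw [pad_of_lt _ (by omega : (i : ℕ) < c)]
  exact glue_apply_apply (blocks h) x y (.inl i)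

theorem pad_glue_blocks_right {a b c : ℕ} (h : a + b = c) (x : Fin a → ℝ) (y : Fin b → ℝ)
    (i : Fin b) : pad (glue (blocks h) (x, y)) (a + i) = y i := by
  rw [pad_of_lt _ (by omega : a + (i : ℕ) < c)]
  exact glue_apply_apply (blocks h) x y (.inr i)

theorem arc_left_arg_eq_glue (hp : p ≤ m) (x : Fin (m - p) → ℝ) {d : ℕ} {t : Fin d → ℝ}
    (ht : ∀ i : Fin (m - p), pad t i = x i) (s : Fin p → ℝ) :
    (fun j : Fin m => if (j : ℕ) < m - p then pad t j else pad s (m - 1 - (j : ℕ))) =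
      glue (revBlocks (Nat.sub_add_cancel hp)) (x, s) := by
  refine eq_glue_iff.2 ⟨fun i => ?_, fun i => ?_⟩
  · have val_eq : (revBlocks (Nat.sub_add_cancel hp) (.inl i) : ℕ) = i := by
      simp [revBlocks, blocks]
    rw [val_eq, if_pos i.2, ht]
  · have val_eq : (revBlocks (Nat.sub_add_cancel hp) (.inr i) : ℕ) = m - p + (p - (i + 1)) := by
      simp [revBlocks, blocks, Fin.val_rev]
    rw [val_eq, if_neg (by omega), show m - 1 - (m - p + (p - ((i : ℕ) + 1))) = i by omega,
      pad_of_lt s i.2]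

theorem arc_right_arg_eq_glue (hpm : p ≤ m) (hp : p ≤ n) (y : Fin (n - p) → ℝ) {d : ℕ}
    {t : Fin d → ℝ} (ht : ∀ i : Fin (n - p), pad t (m - p + i) = y i) (s : Fin p → ℝ) :
    (fun j : Fin n => if (j : ℕ) < p then pad s j else pad t (m + (j : ℕ) - 2 * p)) =
      glue (blocks (Nat.add_sub_cancel' hp)) (s, y) := by
  refine eq_glue_iff.2 ⟨fun i => ?_, fun i => ?_⟩
  · have val_eq : (blocks (Nat.add_sub_cancel' hp) (.inl i) : ℕ) = i := by simp [blocks]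
    rw [val_eq, if_pos i.2, pad_of_lt s i.2]
  · have val_eq : (blocks (Nat.add_sub_cancel' hp) (.inr i) : ℕ) = p + i := by simp [blocks]
    rw [val_eq, if_neg (by omega), show m + (p + (i : ℕ)) - 2 * p = m - p + i by omega, ht]

theorem arc_dim_eq (hpm : p ≤ m) (hpn : p ≤ n) : m - p + (n - p) = m + n - 2 * p := by
  omega

theorem arc_comp_glue (hpm : p ≤ m) (hpn : p ≤ n) (f : (Fin m → ℝ) → ℂ) (g : (Fin n → ℝ) → ℂ) :
    arc m n p f g ∘ glue (blocks (arc_dim_eq hpm hpn)) =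
      contraction (μpos p) (f ∘ glue (revBlocks (Nat.sub_add_cancel hpm)))
        (g ∘ glue (blocks (Nat.add_sub_cancel' hpn))) := by
  funext ⟨x, y⟩
  simp only [Function.comp_apply, arc, arcKer, contraction, μpos]
  congr 1 with s
  rw [arc_left_arg_eq_glue hpm x (pad_glue_blocks_left _ x y),
    arc_right_arg_eq_glue hpm hpn y (pad_glue_blocks_right _ x y)]

theorem memLp_arc (hpm : p ≤ m) (hpn : p ≤ n) (hf : MemLp f 2 (μpos m))
    (hg : MemLp g 2 (μpos n)) : MemLp (arc m n p f g) 2 (μpos (m + n - 2 * p)) := by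
  rw [← memLp_comp_glue_iff, arc_comp_glue hpm hpn]
  exact memLp_contraction (memLp_comp_glue_iff.2 hf) (memLp_comp_glue_iff.2 hg)

theorem L2norm_arc_le (hpm : p ≤ m) (hpn : p ≤ n) (hf : MemLp f 2 (μpos m))
    (hg : MemLp g 2 (μpos n)) :
    L2norm (m + n - 2 * p) (arc m n p f g) ≤ L2norm m f * L2norm n g := by
  rw [L2norm, L2norm, L2norm, ← Real.sqrt_mul (by positivity),
    ← integral_sq_norm_comp_glue (blocks (arc_dim_eq hpm hpn)), arc_comp_glue hpm hpn,
    ← integral_sq_norm_comp_glue (revBlocks (Nat.sub_add_cancel hpm)) f,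
    ← integral_sq_norm_comp_glue (blocks (Nat.add_sub_cancel' hpn)) g]
  exact Real.sqrt_le_sqrt <|
    integral_sq_norm_contraction_le (memLp_comp_glue_iff.2 hf) (memLp_comp_glue_iff.2 hg)

theorem arc_sub_left_ae (hpm : p ≤ m) (hpn : p ≤ n) (hf : MemLp f 2 (μpos m))
    (hf' : MemLp f' 2 (μpos m)) (hg : MemLp g 2 (μpos n)) :
    arc m n p (f - f') g =ᵐ[μpos (m + n - 2 * p)] arc m n p f g - arc m n p f' g := by
  refine ae_eq_of_comp_glue (e := blocks (arc_dim_eq hpm hpn)) ?_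
  rw [Pi.sub_comp]
  simp only [arc_comp_glue hpm hpn, Pi.sub_comp]
  exact contraction_sub_left_ae (memLp_comp_glue_iff.2 hf) (memLp_comp_glue_iff.2 hf')
    (memLp_comp_glue_iff.2 hg)

variable {κ : Type*} {l : Filter κ} {u u' : κ → (Fin m → ℝ) → ℂ} {v : κ → (Fin n → ℝ) → ℂ}

theorem tendsto_L2norm_arc_zero (hpm : p ≤ m) (hpn : p ≤ n) (hu : ∀ k, MemLp (u k) 2 (μpos m))
    (hv : ∀ k, MemLp (v k) 2 (μpos n)) (hu_zero : Tendsto (fun k => L2norm m (u k)) l (𝓝 0))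
    (hv_bdd : l.IsBoundedUnder (· ≤ ·) fun k => L2norm n (v k)) :
    Tendsto (fun k => L2norm (m + n - 2 * p) (arc m n p (u k) (v k))) l (𝓝 0) := by
  refine squeeze_zero (fun _ => L2norm_nonneg _ _) (fun k => L2norm_arc_le hpm hpn (hu k) (hv k))
    (hu_zero.zero_mul_isBoundedUnder_le ?_)
  simpa only [Function.comp_def, Real.norm_of_nonneg (L2norm_nonneg _ _)] using hv_bdd

theorem tendsto_L2norm_arc_sub_arc (hpm : p ≤ m) (hpn : p ≤ n)
    (hu : ∀ k, MemLp (u k) 2 (μpos m)) (hu' : ∀ k, MemLp (u' k) 2 (μpos m))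
    (hv : ∀ k, MemLp (v k) 2 (μpos n))
    (huu' : Tendsto (fun k => L2norm m (u k - u' k)) l (𝓝 0))
    (hv_bdd : l.IsBoundedUnder (· ≤ ·) fun k => L2norm n (v k)) :
    Tendsto (fun k => L2norm (m + n - 2 * p) (arc m n p (u k) (v k) - arc m n p (u' k) (v k))) l
      (𝓝 0) :=
  (tendsto_L2norm_arc_zero hpm hpn (fun k => (hu k).sub (hu' k)) hv huu' hv_bdd).congr fun k =>
    L2norm_congr_ae (arc_sub_left_ae hpm hpn (hu k) (hu' k) (hv k))

end Arc

section Reindex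

variable {a b : ℕ} {F : (Fin a → ℝ) → ℂ}

theorem memLp_reindex_iff (h : a = b) {p : ENNReal} :
    MemLp (reindex h F) p (μpos b) ↔ MemLp F p (μpos a) := by
  subst h
  rfl

theorem L2norm_reindex (h : a = b) (F : (Fin a → ℝ) → ℂ) :
    L2norm b (reindex h F) = L2norm a F := by
  subst h
  rfl

end Reindex

section ContrHalf

variable {q : ℕ}

theorem contrHalf_dim_eq (hq : Even q) : q + q - 2 * (q / 2) = q := by
  rw [Nat.two_mul_div_two_of_even hq, Nat.add_sub_cancel]

theorem contrHalf_eq_reindex_arc (hq : Even q) (f g : (Fin q → ℝ) → ℂ) :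
    contrHalf q f g = reindex (contrHalf_dim_eq hq) (arc q q (q / 2) f g) := by
  funext t
  simp only [contrHalf, reindex, arc, arcKer, pad_comp_cast]

theorem memLp_contrHalf (hq : Even q) {f g : (Fin q → ℝ) → ℂ} (hf : MemLp f 2 (μpos q))
    (hg : MemLp g 2 (μpos q)) : MemLp (contrHalf q f g) 2 (μpos q) := by
  rw [contrHalf_eq_reindex_arc hq, memLp_reindex_iff]
  exact memLp_arc (Nat.div_le_self q 2) (Nat.div_le_self q 2) hf hg

theorem L2norm_contrHalf (hq : Even q) (f g : (Fin q → ℝ) → ℂ) :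
    L2norm q (contrHalf q f g) = L2norm (q + q - 2 * (q / 2)) (arc q q (q / 2) f g) := by
  rw [contrHalf_eq_reindex_arc hq, L2norm_reindex]

theorem L2norm_contrHalf_sub_contrHalf (hq : Even q) (f f' g : (Fin q → ℝ) → ℂ) :
    L2norm q (contrHalf q f g - contrHalf q f' g) =
      L2norm (q + q - 2 * (q / 2)) (arc q q (q / 2) f g - arc q q (q / 2) f' g) := by
  rw [contrHalf_eq_reindex_arc hq, contrHalf_eq_reindex_arc hq,
    ← L2norm_reindex (contrHalf_dim_eq hq)]
  rfl

theorem memLp_foldl_contrHalf (hq : Even q) {f : (Fin q → ℝ) → ℂ} (hf : MemLp f 2 (μpos q))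
    {gs : List ((Fin q → ℝ) → ℂ)} (hgs : ∀ g ∈ gs, MemLp g 2 (μpos q)) :
    MemLp (gs.foldl (contrHalf q) f) 2 (μpos q) :=
  List.foldlRecOn (motive := (MemLp · 2 (μpos q))) gs (contrHalf q) hf
    fun _ hu g hg => memLp_contrHalf hq hu (hgs g hg)

end ContrHalf

theorem isBoundedUnder_L2norm_of_tendsto_L2inner {κ : Type*} {l : Filter κ} {n : ℕ} {c : ℂ}
    {u : κ → (Fin n → ℝ) → ℂ} (h : Tendsto (fun k => L2inner n (u k) (u k)) l (𝓝 c)) :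
    l.IsBoundedUnder (· ≤ ·) fun k => L2norm n (u k) := by
  simpa only [L2norm_eq_sqrt_norm_L2inner] using h.norm.sqrt.isBoundedUnder_le

/-- A family of sequences in `L²(ℝ₊^q)` that is bounded and, along `l`, behaves asymptotically like
a family of mutually orthogonal idempotents for the product `⌢_{q/2}`. -/
structure IsAsymptoticallyOrthogonalIdempotent {ι κ : Type*} (l : Filter κ) (q : ℕ)
    (f : κ → ι → (Fin q → ℝ) → ℂ) : Prop where
  memLp : ∀ k i, MemLp (f k i) 2 (μpos q)
  isBoundedUnder : ∀ i, l.IsBoundedUnder (· ≤ ·) fun k => L2norm q (f k i)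
  idempotent : ∀ i, Tendsto (fun k => L2norm q (contrHalf q (f k i) (f k i) - f k i)) l (𝓝 0)
  orthogonal : Pairwise fun i j =>
    Tendsto (fun k => L2norm q (contrHalf q (f k i) (f k j))) l (𝓝 0)

namespace IsAsymptoticallyOrthogonalIdempotent

variable {ι κ : Type*} {l : Filter κ} {q : ℕ} {f : κ → ι → (Fin q → ℝ) → ℂ}
  {u : κ → (Fin q → ℝ) → ℂ} {j : ι}

theorem of_tendsto_L2inner (hq : Even q) (hmem : ∀ k i, MemLp (f k i) 2 (μpos q)) {c : ι → ℂ}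
    (hinner : ∀ i, Tendsto (fun k => L2inner q (f k i) (f k i)) l (𝓝 (c i)))
    (hdiag : ∀ i, Tendsto (fun k => L2norm q (contrHalf q (f k i) (f k i) - f k i)) l (𝓝 0))
    (hoff : Pairwise fun i j =>
      Tendsto (fun k => L2norm (q + q - 2 * (q / 2)) (arc q q (q / 2) (f k i) (f k j))) l (𝓝 0)) :
    IsAsymptoticallyOrthogonalIdempotent l q f where
  memLp := hmem
  isBoundedUnder i := isBoundedUnder_L2norm_of_tendsto_L2inner (hinner i)
  idempotent := hdiag
  orthogonal i j hij := by simpa only [L2norm_contrHalf hq] using hoff hij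

theorem tendsto_contrHalf_sub_or_zero (hf : IsAsymptoticallyOrthogonalIdempotent l q f)
    (hq : Even q) (hu : ∀ k, MemLp (u k) 2 (μpos q))
    (huj : Tendsto (fun k => L2norm q (u k - f k j)) l (𝓝 0) ∨
      Tendsto (fun k => L2norm q (u k)) l (𝓝 0)) (i : ι) :
    Tendsto (fun k => L2norm q (contrHalf q (u k) (f k i) - f k j)) l (𝓝 0) ∨
      Tendsto (fun k => L2norm q (contrHalf q (u k) (f k i))) l (𝓝 0) := by
  have half_le : q / 2 ≤ q := Nat.div_le_self q 2
  have memLp_mul {v : κ → (Fin q → ℝ) → ℂ} (hv : ∀ k, MemLp (v k) 2 (μpos q)) (k : κ) :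
      MemLp (contrHalf q (v k) (f k i)) 2 (μpos q) := memLp_contrHalf hq (hv k) (hf.memLp k i)
  have memLp_j (k : κ) : MemLp (f k j) 2 (μpos q) := hf.memLp k j
  rcases huj with huj | hu_zero
  · have replace_u : Tendsto
        (fun k => L2norm q (contrHalf q (u k) (f k i) - contrHalf q (f k j) (f k i))) l (𝓝 0) := by
      simp only [L2norm_contrHalf_sub_contrHalf hq]
      exact tendsto_L2norm_arc_sub_arc half_le half_le hu memLp_j (hf.memLp · i) huj
        (hf.isBoundedUnder i)
    obtain rfl | hji := eq_or_ne j i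
    · exact .inl <| tendsto_L2norm_sub_trans (memLp_mul hu) (memLp_mul memLp_j) memLp_j replace_u
        (hf.idempotent j)
    · exact .inr <| tendsto_L2norm_zero_of_sub (memLp_mul hu) (memLp_mul memLp_j) replace_u
        (hf.orthogonal hji)
  · right
    simp only [L2norm_contrHalf hq]
    exact tendsto_L2norm_arc_zero half_le half_le hu (hf.memLp · i) hu_zero (hf.isBoundedUnder i)

theorem tendsto_foldl_contrHalf_sub_or_zero (hf : IsAsymptoticallyOrthogonalIdempotent l q f)
    (hq : Even q) (is : List ι) (hu : ∀ k, MemLp (u k) 2 (μpos q))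
    (huj : Tendsto (fun k => L2norm q (u k - f k j)) l (𝓝 0) ∨
      Tendsto (fun k => L2norm q (u k)) l (𝓝 0)) :
    Tendsto (fun k => L2norm q ((is.map (f k)).foldl (contrHalf q) (u k) - f k j)) l (𝓝 0) ∨
      Tendsto (fun k => L2norm q ((is.map (f k)).foldl (contrHalf q) (u k))) l (𝓝 0) := by
  induction is generalizing u with
  | nil => exact huj
  | cons i _ ih =>
    exact ih (fun k => memLp_contrHalf hq (hu k) (hf.memLp k i))
      (hf.tendsto_contrHalf_sub_or_zero hq hu huj i)

end IsAsymptoticallyOrthogonalIdempotent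

theorem iterated_half_contraction_arc_tendsto_zero_general {ι κ : Type*} {l : Filter κ}
    {q m r : ℕ} (hq : Even q) (hrq : r ≤ q) (hrm : r ≤ m) {f : κ → ι → (Fin q → ℝ) → ℂ}
    (hf : IsAsymptoticallyOrthogonalIdempotent l q f) {g : κ → (Fin m → ℝ) → ℂ}
    (hg : ∀ k, MemLp (g k) 2 (μpos m)) (hg_bdd : l.IsBoundedUnder (· ≤ ·) fun k => L2norm m (g k))
    (j : ι) (hfg : Tendsto (fun k => L2norm (q + m - 2 * r) (arc q m r (f k j) (g k))) l (𝓝 0))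
    (is : List ι) :
    Tendsto (fun k => L2norm (q + m - 2 * r)
      (arc q m r ((is.map (f k)).foldl (contrHalf q) (f k j)) (g k))) l (𝓝 0) := by
  have memLp_fold (k : κ) : MemLp ((is.map (f k)).foldl (contrHalf q) (f k j)) 2 (μpos q) :=
    memLp_foldl_contrHalf hq (hf.memLp k j) (List.forall_mem_map.2 fun i _ => hf.memLp k i)
  have start : Tendsto (fun k => L2norm q (f k j - f k j)) l (𝓝 0) := by
    simp only [sub_self, L2norm_zero, tendsto_const_nhds]
  rcases hf.tendsto_foldl_contrHalf_sub_or_zero hq is (hf.memLp · j) (.inl start)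
    with fold_sub_zero | fold_zero
  · exact tendsto_L2norm_zero_of_sub (fun k => memLp_arc hrq hrm (memLp_fold k) (hg k))
      (fun k => memLp_arc hrq hrm (hf.memLp k j) (hg k))
      (tendsto_L2norm_arc_sub_arc hrq hrm memLp_fold (hf.memLp · j) hg fold_sub_zero hg_bdd) hfg
  · exact tendsto_L2norm_arc_zero hrq hrm memLp_fold hg fold_zero hg_bdd

/-- `r`-contraction (`r ≠ q/2`) of an iterated `q/2`-contraction with
one more function tends to `0` in norm. -/
theorem iterated_half_contraction_arc_tendsto_zero (q : ℕ) (hq2 : 2 ≤ q) (hqe : q % 2 = 0)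
    (lam : ℕ → ℝ) (hlam : ∀ i, 0 < lam i)
    (f : ℕ → ℕ → (Fin q → ℝ) → ℂ)
    (hmem : ∀ n i, MeasureTheory.MemLp (f n i) 2 (μpos q))
    (hsym : ∀ n i, IsSymmFn q (f n i))
    (hinner : ∀ i j, Filter.Tendsto (fun n => L2inner q (f n i) (f n j)) Filter.atTop
      (nhds (if i = j then (lam i : ℂ) else 0)))
    (hdiag : ∀ i, Filter.Tendsto
      (fun n => L2norm q (fun t => contrHalf q (f n i) (f n i) t - f n i t))
      Filter.atTop (nhds 0))
    (hdiag' : ∀ i r, 1 ≤ r → r ≤ q - 1 → r ≠ q / 2 →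
      Filter.Tendsto (fun n => L2norm (q + q - 2 * r) (arc q q r (f n i) (f n i)))
        Filter.atTop (nhds 0))
    (hoff : ∀ i j, i ≠ j → ∀ r, 1 ≤ r → r ≤ q - 1 →
      Filter.Tendsto (fun n => L2norm (q + q - 2 * r) (arc q q r (f n i) (f n j)))
        Filter.atTop (nhds 0))
    (s : ℕ) (hs : 1 ≤ s) (jdx : ℕ → ℕ) (i : ℕ)
    (r : ℕ) (hr1 : 1 ≤ r) (hrq : r ≤ q - 1) (hrh : r ≠ q / 2) :
    Filter.Tendsto (fun n => L2norm (q + q - 2 * r) (arc q q r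
        (((List.range (s - 1)).map fun a => f n (jdx (a + 2))).foldl
          (contrHalf q) (f n (jdx 1)))
        (f n i)))
      Filter.atTop (nhds 0) := by
  have hq : Even q := Nat.even_iff.2 hqe
  have hf : IsAsymptoticallyOrthogonalIdempotent atTop q f :=
    .of_tendsto_L2inner hq hmem (fun j => hinner j j) hdiag
      fun j k hjk => hoff j k hjk (q / 2) (by omega) (by omega)
  have arc_zero : Tendsto (fun n => L2norm (q + q - 2 * r) (arc q q r (f n (jdx 1)) (f n i)))
      atTop (𝓝 0) := by
    obtain rfl | hne := eq_or_ne (jdx 1) i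
    · exact hdiag' _ r hr1 hrq hrh
    · exact hoff _ _ hne r hr1 hrq
  simpa only [List.map_map, Function.comp_def] using
    iterated_half_contraction_arc_tendsto_zero_general hq (by omega) (by omega) hf (hmem · i)
      (hf.isBoundedUnder i) (jdx 1) arc_zero ((List.range (s - 1)).map fun a => jdx (a + 2))

end
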